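/- Let c > 0 be a real number, let δ be a real number with 3 < δ < (5π/4)·c, and let n be a positive integer with 2c/π < n ≤ 2c/π + (2/π²)·δ·log(4·e·π·c/δ) − 3. Let ψ be the n-th PSWF with band limit c, with ODE eigenvalue χ_n. Then (χ_n − c²)/c² < (8/π)·(δ/c); equivalently, χ_n < c² + (8/π)·δ·c. -/

import Mathlib

open Real

/-- `IsPSWF c n ψ χ lam` : `ψ` is the `n`-th prolate spheroidal wave function with
band limit `c`, ODE eigenvalue `χ` and integral eigenvalue `lam`. -/
def IsPSWF (c : ℝ) (n : ℕ) (ψ : ℝ → ℝ) (χ : ℝ) (lam : ℂ) : Prop :=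
  ContinuousOn ψ (Set.Icc (-1) 1) ∧
  (∀ x ∈ Set.Ioo (-1 : ℝ) 1, DifferentiableAt ℝ ψ x ∧ DifferentiableAt ℝ (deriv ψ) x) ∧
  (∀ x ∈ Set.Ioo (-1 : ℝ) 1,
    (1 - x ^ 2) * deriv (deriv ψ) x - 2 * x * deriv ψ x + (χ - c ^ 2 * x ^ 2) * ψ x = 0) ∧
  {x | x ∈ Set.Ioo (-1 : ℝ) 1 ∧ ψ x = 0}.Finite ∧
  {x | x ∈ Set.Ioo (-1 : ℝ) 1 ∧ ψ x = 0}.ncard = n ∧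
  (∫ t in (-1 : ℝ)..1, (ψ t) ^ 2) = 1 ∧
  ∀ x ∈ Set.Icc (-1 : ℝ) 1,
    lam * (ψ x : ℂ) =
      ∫ t in (-1 : ℝ)..1, (ψ t : ℂ) * Complex.exp (Complex.I * (c : ℂ) * (x : ℂ) * (t : ℂ))

/-!
Write the prolate equation as `(p ψ')' + q ψ = 0` with `p = 1 - x²` and `q = χ - c² x²`, and suppose
`c² < χ`. The Liouville–Green function `v = a sin Θ`, with amplitude `a = (p q) ^ (-1/4)` and phase
`Θ' = √(q / p)`, solves `(p v')' + (q - k) v = 0` with `k = (p a')' / a`. A computation gives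
`k > 0`, so by Sturm comparison `ψ` vanishes between any two points at phase distance `π`. The total
phase is the elliptic integral `∫₀^π √(χ - c² cos² t) dt`, which is therefore at most `(n + 1) π`
if `ψ` has at most `n` zeros. If `χ` were at least `c² (1 + η)` with `η = 8δ / (πc)`, the integral
would be at least `2c (1 + (η / 8) (1 + log (32 / η)))`, which exceeds `(n + 1) π`.
-/

/-! ### Sturm–Liouville equations -/

/-- `u` solves `(p u')' + q u = 0` on `s`. The equation is encoded as the first-order system
satisfied by `u` and its quasi-derivative `w = p u'`, so that no regularity of `p` is needed. -/
structure IsSturmLiouvilleSolution (p q u w : ℝ → ℝ) (s : Set ℝ) : Prop where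
  hasDerivAt : ∀ x ∈ s, HasDerivAt u (w x / p x) x
  hasDerivAt_quasiDeriv : ∀ x ∈ s, HasDerivAt w (-(q x * u x)) x

lemma sub_mul_nonneg_of_isMinOn {f : ℝ → ℝ} {d x y : ℝ} (hmin : IsMinOn f (Set.uIcc x y) x)
    (hf : HasDerivAt f d x) : 0 ≤ (y - x) * d := by
  have hcone : y - x ∈ posTangentConeAt (Set.uIcc x y) x :=
    sub_mem_posTangentConeAt_of_segment_subset (segment_eq_uIcc x y).subset
  simpa using hmin.localize.hasFDerivWithinAt_nonneg hf.hasFDerivAt.hasFDerivWithinAt hcone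

lemma nonneg_on_Icc_of_pos_on_Ioo {f : ℝ → ℝ} {α β : ℝ} (hαβ : α < β)
    (hf : ContinuousOn f (Set.Icc α β)) (hpos : ∀ x ∈ Set.Ioo α β, 0 < f x) :
    ∀ x ∈ Set.Icc α β, 0 ≤ f x := by
  rw [← closure_Ioo hαβ.ne] at hf ⊢
  exact fun x hx => le_on_closure (fun y hy => (hpos y hy).le) continuousOn_const hf hx

namespace IsSturmLiouvilleSolution

variable {p q r u v w z : ℝ → ℝ} {s t : Set ℝ} {α β : ℝ}

lemma mono (hu : IsSturmLiouvilleSolution p q u w t) (hst : s ⊆ t) :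
    IsSturmLiouvilleSolution p q u w s :=
  ⟨fun x hx => hu.hasDerivAt x (hst hx), fun x hx => hu.hasDerivAt_quasiDeriv x (hst hx)⟩

lemma neg (hu : IsSturmLiouvilleSolution p q u w s) :
    IsSturmLiouvilleSolution p q (-u) (-w) s where
  hasDerivAt x hx := by simpa only [Pi.neg_apply, neg_div] using (hu.hasDerivAt x hx).neg
  hasDerivAt_quasiDeriv x hx := by
    simpa only [Pi.neg_apply, mul_neg] using (hu.hasDerivAt_quasiDeriv x hx).neg

lemma continuousOn (hu : IsSturmLiouvilleSolution p q u w s) : ContinuousOn u s :=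
  fun x hx => (hu.hasDerivAt x hx).continuousAt.continuousWithinAt

lemma hasDerivAt_wronskian (hu : IsSturmLiouvilleSolution p q u w s)
    (hv : IsSturmLiouvilleSolution p r v z s) {x : ℝ} (hx : x ∈ s) :
    HasDerivAt (fun y => w y * v y - u y * z y) (-((q x - r x) * (u x * v x))) x := by
  refine (((hu.hasDerivAt_quasiDeriv x hx).mul (hv.hasDerivAt x hx)).sub
    ((hu.hasDerivAt x hx).mul (hv.hasDerivAt_quasiDeriv x hx))).congr_deriv ?_
  ring

lemma quasiDeriv_left_nonneg (hαβ : α < β) (hp : 0 < p α)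
    (hv : IsSturmLiouvilleSolution p r v z (Set.Icc α β)) (hvnonneg : ∀ x ∈ Set.Icc α β, 0 ≤ v x)
    (hvα : v α = 0) : 0 ≤ z α := by
  have hmin : IsMinOn v (Set.uIcc α β) α := by
    rw [Set.uIcc_of_le hαβ.le]
    exact fun x hx => hvα.trans_le (hvnonneg x hx)
  have hslope := sub_mul_nonneg_of_isMinOn hmin (hv.hasDerivAt α (Set.left_mem_Icc.2 hαβ.le))
  by_contra! hz
  exact hslope.not_gt (mul_neg_of_pos_of_neg (sub_pos.2 hαβ) (div_neg_of_neg_of_pos hz hp))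

lemma quasiDeriv_right_nonpos (hαβ : α < β) (hp : 0 < p β)
    (hv : IsSturmLiouvilleSolution p r v z (Set.Icc α β)) (hvnonneg : ∀ x ∈ Set.Icc α β, 0 ≤ v x)
    (hvβ : v β = 0) : z β ≤ 0 := by
  have hmin : IsMinOn v (Set.uIcc β α) β := by
    rw [Set.uIcc_of_ge hαβ.le]
    exact fun x hx => hvβ.trans_le (hvnonneg x hx)
  have hslope := sub_mul_nonneg_of_isMinOn hmin (hv.hasDerivAt β (Set.right_mem_Icc.2 hαβ.le))
  by_contra! hz
  exact hslope.not_gt (mul_neg_of_neg_of_pos (sub_neg.2 hαβ) (div_pos hz hp))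

lemma not_forall_pos_of_lt (hαβ : α < β) (hp : ∀ x ∈ Set.Icc α β, 0 < p x)
    (hrq : ∀ x ∈ Set.Ioo α β, r x < q x)
    (hu : IsSturmLiouvilleSolution p q u w (Set.Icc α β))
    (hv : IsSturmLiouvilleSolution p r v z (Set.Icc α β))
    (hvpos : ∀ x ∈ Set.Ioo α β, 0 < v x) (hvα : v α = 0) (hvβ : v β = 0) :
    ¬ ∀ x ∈ Set.Ioo α β, 0 < u x := by
  intro hupos
  have hα : α ∈ Set.Icc α β := Set.left_mem_Icc.2 hαβ.le
  have hβ : β ∈ Set.Icc α β := Set.right_mem_Icc.2 hαβ.le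
  have hunonneg := nonneg_on_Icc_of_pos_on_Ioo hαβ hu.continuousOn hupos
  have hvnonneg := nonneg_on_Icc_of_pos_on_Ioo hαβ hv.continuousOn hvpos
  have hanti : StrictAntiOn (fun y => w y * v y - u y * z y) (Set.Icc α β) := by
    refine strictAntiOn_of_deriv_neg (convex_Icc α β)
      (fun x hx => (hu.hasDerivAt_wronskian hv hx).continuousAt.continuousWithinAt) fun x hx => ?_
    rw [(hu.hasDerivAt_wronskian hv (interior_subset hx)).deriv, neg_lt_zero]
    rw [interior_Icc] at hx
    exact mul_pos (sub_pos.2 (hrq x hx)) (mul_pos (hupos x hx) (hvpos x hx))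
  have hdecrease : u α * z α < u β * z β := by
    simpa only [hvα, hvβ, mul_zero, zero_sub, neg_lt_neg_iff] using hanti hα hβ hαβ
  have hleft : 0 ≤ u α * z α :=
    mul_nonneg (hunonneg α hα) (hv.quasiDeriv_left_nonneg hαβ (hp α hα) hvnonneg hvα)
  have hright : u β * z β ≤ 0 := mul_nonpos_of_nonneg_of_nonpos (hunonneg β hβ)
    (hv.quasiDeriv_right_nonpos hαβ (hp β hβ) hvnonneg hvβ)
  exact hdecrease.not_ge (hright.trans hleft)

theorem exists_zero_of_lt (hαβ : α < β) (hp : ∀ x ∈ Set.Icc α β, 0 < p x)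
    (hrq : ∀ x ∈ Set.Ioo α β, r x < q x)
    (hu : IsSturmLiouvilleSolution p q u w (Set.Icc α β))
    (hv : IsSturmLiouvilleSolution p r v z (Set.Icc α β))
    (hvpos : ∀ x ∈ Set.Ioo α β, 0 < v x) (hvα : v α = 0) (hvβ : v β = 0) :
    ∃ x ∈ Set.Ioo α β, u x = 0 := by
  obtain ⟨x, hx, hux⟩ : ∃ x ∈ Set.Ioo α β, u x ≤ 0 := by
    simpa [and_assoc] using not_forall_pos_of_lt hαβ hp hrq hu hv hvpos hvα hvβ
  obtain ⟨y, hy, huy⟩ : ∃ y ∈ Set.Ioo α β, 0 ≤ u y := by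
    simpa [and_assoc] using not_forall_pos_of_lt hαβ hp hrq hu.neg hv hvpos hvα hvβ
  exact isPreconnected_Ioo.intermediate_value hx hy
    (hu.continuousOn.mono Set.Ioo_subset_Icc_self) ⟨hux, huy⟩

variable {a b k Θ : ℝ → ℝ}

-- The amplitude and the phase separate because `p Θ' a² = 1` cancels the `cos Θ` terms.
lemma amplitude_mul_sin (ha : IsSturmLiouvilleSolution p (fun x => -k x) a b s)
    (ha0 : ∀ x ∈ s, a x ≠ 0) (hp0 : ∀ x ∈ s, p x ≠ 0)
    (hΘ : ∀ x ∈ s, HasDerivAt Θ (1 / (p x * a x ^ 2)) x) :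
    IsSturmLiouvilleSolution p (fun x => 1 / (p x * a x ^ 4) - k x)
      (fun x => a x * sin (Θ x)) (fun x => b x * sin (Θ x) + cos (Θ x) / a x) s where
  hasDerivAt x hx := by
    have := ha0 x hx
    have := hp0 x hx
    refine ((ha.hasDerivAt x hx).mul (hΘ x hx).sin).congr_deriv ?_
    field_simp
  hasDerivAt_quasiDeriv x hx := by
    have := ha0 x hx
    have := hp0 x hx
    refine (((ha.hasDerivAt_quasiDeriv x hx).mul (hΘ x hx).sin).add
      ((hΘ x hx).cos.div (ha.hasDerivAt x hx) (ha0 x hx))).congr_deriv ?_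
    field_simp
    ring

theorem exists_zero_of_phase_sub_eq_pi (hαβ : α < β) (hp : ∀ x ∈ Set.Icc α β, 0 < p x)
    (hu : IsSturmLiouvilleSolution p q u w (Set.Icc α β))
    (ha : IsSturmLiouvilleSolution p (fun x => -k x) a b (Set.Icc α β))
    (hapos : ∀ x ∈ Set.Icc α β, 0 < a x)
    (hΘ : ∀ x ∈ Set.Icc α β, HasDerivAt Θ (1 / (p x * a x ^ 2)) x)
    (hk : ∀ x ∈ Set.Ioo α β, 1 / (p x * a x ^ 4) - k x < q x) (hΘπ : Θ β - Θ α = π) :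
    ∃ x ∈ Set.Ioo α β, u x = 0 := by
  have hv := ha.amplitude_mul_sin (fun x hx => (hapos x hx).ne') (fun x hx => (hp x hx).ne')
    fun x hx => (hΘ x hx).sub_const (Θ α)
  have hΘmono : StrictMonoOn Θ (Set.Icc α β) := by
    refine strictMonoOn_of_deriv_pos (convex_Icc α β)
      (fun x hx => (hΘ x hx).continuousAt.continuousWithinAt) fun x hx => ?_
    have hx' := interior_subset hx
    rw [(hΘ x hx').deriv]
    exact one_div_pos.2 (mul_pos (hp x hx') (pow_pos (hapos x hx') 2))
  refine exists_zero_of_lt hαβ hp hk hu hv (fun x hx => ?_) (by simp) (by simp [hΘπ])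
  have hx' := Set.Ioo_subset_Icc_self hx
  have hlower := hΘmono (Set.left_mem_Icc.2 hαβ.le) hx' hx.1
  have hupper := hΘmono hx' (Set.right_mem_Icc.2 hαβ.le) hx.2
  exact mul_pos (hapos x hx') (sin_pos_of_pos_of_lt_pi (by linarith) (by linarith))

end IsSturmLiouvilleSolution

lemma le_encard_inter_Ioo_of_mul_lt_sub {Θ : ℝ → ℝ} {Z : Set ℝ} {A B L : ℝ} {m : ℕ} (hL : 0 < L)
    (hAB : A ≤ B) (hΘ : ContinuousOn Θ (Set.Icc A B))
    (hZ : ∀ α β, A < α → α < β → β < B → Θ β - Θ α = L → (Z ∩ Set.Ioo α β).Nonempty)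
    (hm : m * L < Θ B - Θ A) : (m : ℕ∞) ≤ (Z ∩ Set.Ioo A B).encard := by
  induction m generalizing A with
  | zero => simp
  | succ m ih =>
    push_cast at hm ⊢
    have hmL : 0 ≤ m * L := by positivity
    obtain ⟨β, ⟨hAβ, hβB⟩, hΘβ⟩ : ∃ β ∈ Set.Ioo A B, Θ β = (Θ A + L + (Θ B - m * L)) / 2 :=
      intermediate_value_Ioo hAB hΘ ⟨by linarith, by linarith⟩
    obtain ⟨α, ⟨hAα, hαβ⟩, hΘα⟩ : ∃ α ∈ Set.Ioo A β, Θ α = Θ β - L :=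
      intermediate_value_Ioo hAβ.le (hΘ.mono (Set.Icc_subset_Icc_right hβB.le))
        ⟨by linarith, by linarith⟩
    obtain ⟨x, hxZ, hαx, hxβ⟩ := hZ α β hAα hαβ hβB (by linarith)
    have hrest : (m : ℕ∞) ≤ (Z ∩ Set.Ioo β B).encard :=
      ih hβB.le (hΘ.mono (Set.Icc_subset_Icc_left hAβ.le))
        (fun α' β' hβα' => hZ α' β' (hAβ.trans hβα')) (by linarith)
    calc (m : ℕ∞) + 1 ≤ (Z ∩ Set.Ioo β B).encard + 1 := by gcongr
      _ = (insert x (Z ∩ Set.Ioo β B)).encard :=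
        (Set.encard_insert_of_notMem fun hx => hxβ.not_gt hx.2.1).symm
      _ ≤ (Z ∩ Set.Ioo A B).encard := Set.encard_le_encard <| Set.insert_subset
        ⟨hxZ, hAα.trans hαx, hxβ.trans hβB⟩
        (Set.inter_subset_inter_right Z (Set.Ioo_subset_Ioo_left hAβ.le))

/-! ### The Liouville–Green comparison function of the prolate equation -/

section Prolate

variable {c χ x : ℝ}

/-- The Liouville–Green amplitude `(p q) ^ (-1/4)` of the prolate equation. -/
noncomputable def prolateAmplitude (c χ x : ℝ) : ℝ :=
  ((1 - x ^ 2) * (χ - c ^ 2 * x ^ 2)) ^ (-1 / 4 : ℝ)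

/-- The quasi-derivative `p a'` of the Liouville–Green amplitude `a` of the prolate equation. -/
noncomputable def prolateAmplitudeQuasiDeriv (c χ x : ℝ) : ℝ :=
  prolateAmplitude c χ x * (x / 2 * (1 + c ^ 2 * (1 - x ^ 2) / (χ - c ^ 2 * x ^ 2)))

/-- The amount `(p a')' / a` by which the coefficient of the Liouville–Green comparison equation
falls short of `q`, expressed through `σ = c² p / q`. -/
noncomputable def prolateDefect (c χ x : ℝ) : ℝ :=
  let σ := c ^ 2 * (1 - x ^ 2) / (χ - c ^ 2 * x ^ 2)
  (1 + σ) / 2 + x ^ 2 * (5 * σ ^ 2 - 2 * σ + 1) / (4 * (1 - x ^ 2))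

/-- The Liouville–Green phase of the prolate equation, an antiderivative of `√(q / p)`. The
substitution `x = cos t` removes the singularities of the integrand at `±1`. -/
noncomputable def prolatePhase (c χ x : ℝ) : ℝ :=
  -∫ t in (0 : ℝ)..arccos x, √(χ - c ^ 2 * cos t ^ 2)

lemma one_sub_sq_pos_of_mem_Ioo (hx : x ∈ Set.Ioo (-1 : ℝ) 1) : 0 < 1 - x ^ 2 :=
  sub_pos.2 (sq_lt_one_iff_abs_lt_one x |>.2 (abs_lt.2 hx))

lemma sub_mul_sq_pos_of_mem_Ioo (hχ : c ^ 2 < χ) (hx : x ∈ Set.Ioo (-1 : ℝ) 1) :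
    0 < χ - c ^ 2 * x ^ 2 := by
  linarith [mul_nonneg (sq_nonneg c) (one_sub_sq_pos_of_mem_Ioo hx).le]

lemma prolateAmplitude_pos (hχ : c ^ 2 < χ) (hx : x ∈ Set.Ioo (-1 : ℝ) 1) :
    0 < prolateAmplitude c χ x :=
  rpow_pos_of_pos (mul_pos (one_sub_sq_pos_of_mem_Ioo hx) (sub_mul_sq_pos_of_mem_Ioo hχ hx)) _

lemma prolateAmplitude_sq (hχ : c ^ 2 < χ) (hx : x ∈ Set.Ioo (-1 : ℝ) 1) :
    prolateAmplitude c χ x ^ 2 = 1 / (√(1 - x ^ 2) * √(χ - c ^ 2 * x ^ 2)) := by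
  have hp := one_sub_sq_pos_of_mem_Ioo hx
  have hpq := mul_pos hp (sub_mul_sq_pos_of_mem_Ioo hχ hx)
  rw [prolateAmplitude, ← rpow_mul_natCast hpq.le, ← sqrt_mul hp.le, sqrt_eq_rpow, one_div,
    ← rpow_neg hpq.le]
  norm_num

lemma one_div_mul_prolateAmplitude_sq (hχ : c ^ 2 < χ) (hx : x ∈ Set.Ioo (-1 : ℝ) 1) :
    1 / ((1 - x ^ 2) * prolateAmplitude c χ x ^ 2) = √(χ - c ^ 2 * x ^ 2) / √(1 - x ^ 2) := by
  have hp := one_sub_sq_pos_of_mem_Ioo hx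
  have := sqrt_pos.2 hp
  have := sqrt_pos.2 (sub_mul_sq_pos_of_mem_Ioo hχ hx)
  rw [prolateAmplitude_sq hχ hx]
  field_simp
  rw [sq_sqrt hp.le]

lemma one_div_mul_prolateAmplitude_pow_four (hχ : c ^ 2 < χ) (hx : x ∈ Set.Ioo (-1 : ℝ) 1) :
    1 / ((1 - x ^ 2) * prolateAmplitude c χ x ^ 4) = χ - c ^ 2 * x ^ 2 := by
  have hp := one_sub_sq_pos_of_mem_Ioo hx
  have hq := sub_mul_sq_pos_of_mem_Ioo hχ hx
  rw [show prolateAmplitude c χ x ^ 4 = (prolateAmplitude c χ x ^ 2) ^ 2 by ring,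
    prolateAmplitude_sq hχ hx, div_pow, mul_pow, sq_sqrt hp.le, sq_sqrt hq.le]
  field_simp

lemma prolateDefect_pos (hχ : c ^ 2 < χ) (hx : x ∈ Set.Ioo (-1 : ℝ) 1) :
    0 < prolateDefect c χ x := by
  have hp := one_sub_sq_pos_of_mem_Ioo hx
  have hq := sub_mul_sq_pos_of_mem_Ioo hχ hx
  unfold prolateDefect
  extract_lets σ
  have : 0 ≤ σ := by positivity
  have hquadratic : 0 ≤ 5 * σ ^ 2 - 2 * σ + 1 := by linarith [sq_nonneg (2 * σ), sq_nonneg (σ - 1)]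
  positivity

lemma hasDerivAt_one_sub_sq (x : ℝ) : HasDerivAt (fun y : ℝ => 1 - y ^ 2) (-(2 * x)) x := by
  simpa using ((hasDerivAt_id x).pow 2).const_sub 1

lemma hasDerivAt_sub_mul_sq (c χ x : ℝ) :
    HasDerivAt (fun y : ℝ => χ - c ^ 2 * y ^ 2) (-(c ^ 2 * (2 * x))) x := by
  simpa using (((hasDerivAt_id x).pow 2).const_mul (c ^ 2)).const_sub χ

lemma hasDerivAt_prolateAmplitude (hχ : c ^ 2 < χ) (hx : x ∈ Set.Ioo (-1 : ℝ) 1) :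
    HasDerivAt (prolateAmplitude c χ) (prolateAmplitudeQuasiDeriv c χ x / (1 - x ^ 2)) x := by
  have hp := one_sub_sq_pos_of_mem_Ioo hx
  have hq := sub_mul_sq_pos_of_mem_Ioo hχ hx
  have hpq := (mul_pos hp hq).ne'
  refine (((hasDerivAt_one_sub_sq x).mul (hasDerivAt_sub_mul_sq c χ x)).rpow_const
    (p := -1 / 4) (Or.inl hpq)).congr_deriv ?_
  simp only [Pi.mul_apply, rpow_sub_one hpq, prolateAmplitudeQuasiDeriv, prolateAmplitude]
  generalize 1 - x ^ 2 = p at *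
  generalize χ - c ^ 2 * x ^ 2 = q at *
  field_simp
  ring

lemma hasDerivAt_prolateAmplitudeQuasiDeriv (hχ : c ^ 2 < χ) (hx : x ∈ Set.Ioo (-1 : ℝ) 1) :
    HasDerivAt (prolateAmplitudeQuasiDeriv c χ) (prolateDefect c χ x * prolateAmplitude c χ x)
      x := by
  have hp := one_sub_sq_pos_of_mem_Ioo hx
  have hq := sub_mul_sq_pos_of_mem_Ioo hχ hx
  refine ((hasDerivAt_prolateAmplitude hχ hx).mul (((hasDerivAt_id x).div_const 2).mul
    ((((hasDerivAt_one_sub_sq x).const_mul (c ^ 2)).div (hasDerivAt_sub_mul_sq c χ x)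
      hq.ne').const_add 1))).congr_deriv ?_
  simp only [Pi.mul_apply, Pi.div_apply, id_eq, prolateAmplitudeQuasiDeriv, prolateDefect]
  generalize 1 - x ^ 2 = p at *
  generalize χ - c ^ 2 * x ^ 2 = q at *
  field_simp
  ring

lemma isSturmLiouvilleSolution_prolateAmplitude (hχ : c ^ 2 < χ) :
    IsSturmLiouvilleSolution (fun x => 1 - x ^ 2) (fun x => -prolateDefect c χ x)
      (prolateAmplitude c χ) (prolateAmplitudeQuasiDeriv c χ) (Set.Ioo (-1) 1) where
  hasDerivAt _ hx := hasDerivAt_prolateAmplitude hχ hx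
  hasDerivAt_quasiDeriv x hx := by
    simpa only [neg_mul, neg_neg] using hasDerivAt_prolateAmplitudeQuasiDeriv hχ hx

lemma hasDerivAt_prolatePhase (hχ : c ^ 2 < χ) (hx : x ∈ Set.Ioo (-1 : ℝ) 1) :
    HasDerivAt (prolatePhase c χ) (1 / ((1 - x ^ 2) * prolateAmplitude c χ x ^ 2)) x := by
  have hcont : Continuous fun t : ℝ => √(χ - c ^ 2 * cos t ^ 2) := by fun_prop
  refine ((hcont.integral_hasStrictDerivAt 0 (arccos x)).hasDerivAt.comp x
    (hasDerivAt_arccos hx.1.ne' hx.2.ne)).neg.congr_deriv ?_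
  rw [one_div_mul_prolateAmplitude_sq hχ hx, cos_arccos hx.1.le hx.2.le]
  ring

lemma continuous_prolatePhase (c χ : ℝ) : Continuous (prolatePhase c χ) := by
  have hcont : Continuous fun t : ℝ => √(χ - c ^ 2 * cos t ^ 2) := by fun_prop
  exact ((intervalIntegral.continuous_primitive (fun _ _ => hcont.intervalIntegrable _ _) 0).comp
    continuous_arccos).neg

lemma prolatePhase_one_sub_prolatePhase_neg_one (c χ : ℝ) :
    prolatePhase c χ 1 - prolatePhase c χ (-1) = ∫ t in (0 : ℝ)..π, √(χ - c ^ 2 * cos t ^ 2) := by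
  simp [prolatePhase]

theorem le_encard_zeros_of_mul_pi_lt_integral (hχ : c ^ 2 < χ) {ψ w : ℝ → ℝ}
    (hψ : IsSturmLiouvilleSolution (fun x => 1 - x ^ 2) (fun x => χ - c ^ 2 * x ^ 2) ψ w
      (Set.Ioo (-1) 1))
    {m : ℕ} (hm : m * π < ∫ t in (0 : ℝ)..π, √(χ - c ^ 2 * cos t ^ 2)) :
    (m : ℕ∞) ≤ {x | x ∈ Set.Ioo (-1 : ℝ) 1 ∧ ψ x = 0}.encard := by
  rw [← prolatePhase_one_sub_prolatePhase_neg_one] at hm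
  have hcount : (m : ℕ∞) ≤ ({x | ψ x = 0} ∩ Set.Ioo (-1) 1).encard := by
    refine le_encard_inter_Ioo_of_mul_lt_sub pi_pos (by norm_num)
      (continuous_prolatePhase c χ).continuousOn (fun α β hα hαβ hβ hphase => ?_) hm
    have hsub : Set.Icc α β ⊆ Set.Ioo (-1) 1 := Set.Icc_subset_Ioo hα hβ
    obtain ⟨x, hx, hψx⟩ := IsSturmLiouvilleSolution.exists_zero_of_phase_sub_eq_pi hαβ
      (fun x hx => one_sub_sq_pos_of_mem_Ioo (hsub hx)) (hψ.mono hsub)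
      ((isSturmLiouvilleSolution_prolateAmplitude hχ).mono hsub)
      (fun x hx => prolateAmplitude_pos hχ (hsub hx))
      (fun x hx => hasDerivAt_prolatePhase hχ (hsub hx))
      (fun x hx => by
        have hx' := hsub (Set.Ioo_subset_Icc_self hx)
        rw [one_div_mul_prolateAmplitude_pow_four hχ hx']
        exact sub_lt_self _ (prolateDefect_pos hχ hx')) hphase
    exact ⟨x, hψx, hx⟩
  rwa [Set.inter_comm] at hcount

end Prolate

/-! ### Lower bounds for the elliptic integral -/

section EllipticIntegral

variable {η : ℝ}

lemma antitone_sqrt_add_sq_sub (hη : 0 ≤ η) : Antitone fun x : ℝ => √(η + x ^ 2) - x := by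
  intro x y hxy
  have hx : x ≤ √(η + x ^ 2) := le_sqrt_of_sq_le (by linarith)
  have hsq : √(η + x ^ 2) ^ 2 = η + x ^ 2 := sq_sqrt (by positivity)
  have hsqrt : √(η + y ^ 2) ≤ √(η + x ^ 2) + (y - x) := by
    refine sqrt_le_iff.2 ⟨add_nonneg (sqrt_nonneg _) (sub_nonneg.2 hxy), ?_⟩
    linarith [mul_nonneg (sub_nonneg.2 hxy) (sub_nonneg.2 hx)]
  linarith

lemma hasDerivAt_antideriv_sqrt_add_sq (hη : 0 < η) (x : ℝ) :
    HasDerivAt (fun t => t / 2 * √(η + t ^ 2) + η / 2 * log (t + √(η + t ^ 2)))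
      √(η + x ^ 2) x := by
  have hpos : 0 < η + x ^ 2 := by positivity
  have hsqrt : HasDerivAt (fun t : ℝ => √(η + t ^ 2)) (2 * x / (2 * √(η + x ^ 2))) x := by
    simpa using (((hasDerivAt_id x).pow 2).const_add η).sqrt hpos.ne'
  have hs : 0 < √(η + x ^ 2) := sqrt_pos.2 hpos
  have hlog : x + √(η + x ^ 2) ≠ 0 := by
    have := neg_abs_le x
    have := lt_sqrt_of_sq_lt (show |x| ^ 2 < η + x ^ 2 by rw [sq_abs]; linarith)
    linarith
  refine ((((hasDerivAt_id x).div_const 2).mul hsqrt).add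
    ((((hasDerivAt_id x).add hsqrt).log hlog).const_mul (η / 2))).congr_deriv ?_
  have hsq : √(η + x ^ 2) ^ 2 = η + x ^ 2 := sq_sqrt hpos.le
  simp only [Pi.add_apply, id_eq]
  generalize √(η + x ^ 2) = s at *
  obtain rfl : η = s ^ 2 - x ^ 2 := by linarith
  field_simp
  ring

lemma integral_sqrt_add_sq (hη : 0 < η) (b : ℝ) :
    ∫ t in (0 : ℝ)..b, √(η + t ^ 2) =
      b / 2 * √(η + b ^ 2) + η / 2 * (log (b + √(η + b ^ 2)) - log √η) := by
  have hcont : Continuous fun t : ℝ => √(η + t ^ 2) := by fun_prop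
  rw [intervalIntegral.integral_eq_sub_of_hasDerivAt
    (fun x _ => hasDerivAt_antideriv_sqrt_add_sq hη x) (hcont.intervalIntegrable _ _)]
  simp only [ne_eq, OfNat.ofNat_ne_zero, not_false_eq_true, zero_pow, add_zero, zero_add,
    zero_div, zero_mul]
  ring

lemma integral_sqrt_add_sq_le_integral_sqrt_add_sin_sq (hη : 0 ≤ η) :
    1 - (π / 2) ^ 2 / 2 + ∫ t in (0 : ℝ)..(π / 2), √(η + t ^ 2) ≤
      ∫ t in (0 : ℝ)..(π / 2), √(η + sin t ^ 2) := by
  have hsqrt : Continuous fun t : ℝ => √(η + t ^ 2) := by fun_prop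
  have hsin : Continuous fun t : ℝ => √(η + sin t ^ 2) := by fun_prop
  have hsinSub : Continuous fun t : ℝ => sin t - t := by fun_prop
  have hminorant : Continuous fun t : ℝ => sin t - t + √(η + t ^ 2) := by fun_prop
  calc 1 - (π / 2) ^ 2 / 2 + ∫ t in (0 : ℝ)..(π / 2), √(η + t ^ 2)
      = ∫ t in (0 : ℝ)..(π / 2), (sin t - t + √(η + t ^ 2)) := by
        rw [intervalIntegral.integral_add
            (hsinSub.intervalIntegrable _ _) (hsqrt.intervalIntegrable _ _),
          intervalIntegral.integral_sub (continuous_sin.intervalIntegrable _ _)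
            (continuous_id'.intervalIntegrable _ _), integral_sin, integral_id]
        simp
    _ ≤ ∫ t in (0 : ℝ)..(π / 2), √(η + sin t ^ 2) := by
        refine intervalIntegral.integral_mono_on (by positivity)
          (hminorant.intervalIntegrable _ _) (hsin.intervalIntegrable _ _) fun t ht => ?_
        have hanti : √(η + t ^ 2) - t ≤ √(η + sin t ^ 2) - sin t :=
          antitone_sqrt_add_sq_sub hη (sin_le ht.1)
        linarith

lemma log_div_four_add_log_sqrt_le {b : ℝ} (hη : 0 < η) (hb : 3 / 2 ≤ b) :
    log (32 / η) / 4 + log √η ≤ log (b + √(η + b ^ 2)) := by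
  have hbs : b ≤ √(η + b ^ 2) := le_sqrt_of_sq_le (by linarith)
  have hsq : √(η + b ^ 2) ^ 2 = η + b ^ 2 := sq_sqrt (by positivity)
  have hsum : 9 + η ≤ (b + √(η + b ^ 2)) ^ 2 := by nlinarith
  have hpow : 32 * η ≤ (b + √(η + b ^ 2)) ^ 4 := calc
    32 * η ≤ (9 + η) ^ 2 := by nlinarith [sq_nonneg (η - 7)]
    _ ≤ ((b + √(η + b ^ 2)) ^ 2) ^ 2 := by gcongr
    _ = (b + √(η + b ^ 2)) ^ 4 := by ring
  have hlog := log_le_log (by positivity) hpow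
  rw [log_mul (by norm_num) hη.ne', log_pow] at hlog
  rw [log_div (by norm_num) hη.ne', log_sqrt hη.le]
  push_cast at hlog
  linarith

lemma sq_add_div_four_le_mul_sqrt {b : ℝ} (hb : 0 ≤ b) (hη0 : 0 ≤ η) (hη : η ≤ 8 * b ^ 2) :
    b ^ 2 + η / 4 ≤ b * √(η + b ^ 2) := by
  refine le_of_sq_le_sq ?_ (by positivity)
  rw [mul_pow, sq_sqrt (by positivity)]
  linarith [mul_nonneg hη0 (sub_nonneg.2 hη)]

lemma div_eight_mul_one_add_log_le_four (hη : 0 < η) : η / 8 * (1 + log (32 / η)) ≤ 4 :=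
  calc η / 8 * (1 + log (32 / η)) ≤ η / 8 * (32 / η) := by
        gcongr
        linarith [log_le_sub_one_of_pos (show 0 < 32 / η by positivity)]
    _ = 4 := by field_simp; norm_num

-- For `η ≥ 16` the left-hand side is at most `5`, while the integrand is at least `4`.
theorem le_integral_sqrt_add_sin_sq (hη : 0 < η) :
    1 + η / 8 * (1 + log (32 / η)) ≤ ∫ t in (0 : ℝ)..(π / 2), √(η + sin t ^ 2) := by
  have hπ := pi_gt_three
  rcases le_total η 16 with hsmall | hlarge
  · have hb : 3 / 2 ≤ π / 2 := by linarith
    have hsqrt := sq_add_div_four_le_mul_sqrt (η := η) (by linarith) hη.le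
      (hsmall.trans (by nlinarith : 16 ≤ 8 * (π / 2) ^ 2))
    have hlog := mul_le_mul_of_nonneg_left (log_div_four_add_log_sqrt_le hη hb) (half_pos hη).le
    have hintegral := integral_sqrt_add_sq_le_integral_sqrt_add_sin_sq hη.le
    rw [integral_sqrt_add_sq hη] at hintegral
    linarith
  · have hcont : Continuous fun t : ℝ => √(η + sin t ^ 2) := by fun_prop
    have hintegral : ∫ _ in (0 : ℝ)..(π / 2), (4 : ℝ) ≤
        ∫ t in (0 : ℝ)..(π / 2), √(η + sin t ^ 2) := by
      refine intervalIntegral.integral_mono_on (by positivity) (by simp)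
        (hcont.intervalIntegrable _ _) fun t _ => le_sqrt_of_sq_le ?_
      linarith [sq_nonneg (sin t)]
    rw [intervalIntegral.integral_const, smul_eq_mul] at hintegral
    linarith [div_eight_mul_one_add_log_le_four hη]

lemma integral_comp_sin_zero_pi {g : ℝ → ℝ} (hg : Continuous g) :
    ∫ t in (0 : ℝ)..π, g (sin t) = 2 * ∫ t in (0 : ℝ)..(π / 2), g (sin t) := by
  have hint (x y : ℝ) : IntervalIntegrable (fun t => g (sin t)) MeasureTheory.volume x y :=
    (hg.comp continuous_sin).intervalIntegrable x y
  have hreflect : ∫ t in (π / 2)..π, g (sin t) = ∫ t in (0 : ℝ)..(π / 2), g (sin t) := by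
    simpa [sub_half] using
      (intervalIntegral.integral_comp_sub_left (a := 0) (b := π / 2) (fun t => g (sin t)) π).symm
  rw [← intervalIntegral.integral_add_adjacent_intervals (hint 0 (π / 2)) (hint _ π), hreflect,
    two_mul]

theorem le_integral_sqrt_sub_mul_cos_sq {c χ : ℝ} (hc : 0 ≤ c) (hη : 0 < η)
    (hχ : c ^ 2 * η ≤ χ - c ^ 2) :
    2 * c * (1 + η / 8 * (1 + log (32 / η))) ≤ ∫ t in (0 : ℝ)..π, √(χ - c ^ 2 * cos t ^ 2) := by
  have hcont : Continuous fun t : ℝ => c * √(η + sin t ^ 2) := by fun_prop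
  have hcont' : Continuous fun t : ℝ => √(χ - c ^ 2 * cos t ^ 2) := by fun_prop
  calc 2 * c * (1 + η / 8 * (1 + log (32 / η)))
      ≤ 2 * c * ∫ t in (0 : ℝ)..(π / 2), √(η + sin t ^ 2) := by
        gcongr
        exact le_integral_sqrt_add_sin_sq hη
    _ = ∫ t in (0 : ℝ)..π, c * √(η + sin t ^ 2) := by
        rw [intervalIntegral.integral_const_mul,
          integral_comp_sin_zero_pi (g := fun s => √(η + s ^ 2)) (by fun_prop)]
        ring
    _ ≤ ∫ t in (0 : ℝ)..π, √(χ - c ^ 2 * cos t ^ 2) := by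
        refine intervalIntegral.integral_mono_on pi_nonneg (hcont.intervalIntegrable _ _)
          (hcont'.intervalIntegrable _ _) fun t _ => le_sqrt_of_sq_le ?_
        rw [mul_pow, sq_sqrt (by positivity), cos_sq']
        linarith

end EllipticIntegral

/-! ### The eigenvalue bound -/

namespace IsPSWF

variable {c χ : ℝ} {n : ℕ} {ψ : ℝ → ℝ} {lam : ℂ}

lemma isSturmLiouvilleSolution (hψ : IsPSWF c n ψ χ lam) :
    IsSturmLiouvilleSolution (fun x => 1 - x ^ 2) (fun x => χ - c ^ 2 * x ^ 2) ψ
      (fun x => (1 - x ^ 2) * deriv ψ x) (Set.Ioo (-1) 1) := by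
  obtain ⟨-, hdiff, hode, -⟩ := hψ
  refine ⟨fun x hx => ?_, fun x hx => ?_⟩
  · rw [mul_div_cancel_left₀ _ (one_sub_sq_pos_of_mem_Ioo hx).ne']
    exact (hdiff x hx).1.hasDerivAt
  · refine ((hasDerivAt_one_sub_sq x).mul (hdiff x hx).2.hasDerivAt).congr_deriv ?_
    linarith [hode x hx]

lemma encard_zeros (hψ : IsPSWF c n ψ χ lam) :
    {x | x ∈ Set.Ioo (-1 : ℝ) 1 ∧ ψ x = 0}.encard = n := by
  obtain ⟨-, -, -, hfinite, hncard, -⟩ := hψ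
  rw [← hfinite.cast_ncard_eq, hncard]

end IsPSWF

theorem stmt7_general {c δ χ : ℝ} (hc : 0 < c) (hδ : 0 < δ) {n : ℕ}
    (hn : n + 1 < 2 * c / π + 2 / π ^ 2 * δ * log (4 * exp 1 * π * c / δ)) {ψ w : ℝ → ℝ}
    (hψ : IsSturmLiouvilleSolution (fun x => 1 - x ^ 2) (fun x => χ - c ^ 2 * x ^ 2) ψ w
      (Set.Ioo (-1) 1))
    (hzeros : {x | x ∈ Set.Ioo (-1 : ℝ) 1 ∧ ψ x = 0}.encard ≤ n) :
    (χ - c ^ 2) / c ^ 2 < 8 / π * (δ / c) := by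
  by_contra! hcontra
  set η := 8 / π * (δ / c) with hη_def
  have hη : 0 < η := by positivity
  have hχη : c ^ 2 * η ≤ χ - c ^ 2 := by rwa [le_div_iff₀' (by positivity)] at hcontra
  have hχ : c ^ 2 < χ := sub_pos.1 ((by positivity : 0 < c ^ 2 * η).trans_le hχη)
  have hlog : log (4 * exp 1 * π * c / δ) = 1 + log (32 / η) := by
    rw [show 4 * exp 1 * π * c / δ = exp 1 * (32 / η) by rw [hη_def]; field_simp; norm_num,
      log_mul (exp_pos 1).ne' (by positivity), log_exp]
  have hphase : ((n + 1 : ℕ) : ℝ) * π < ∫ t in (0 : ℝ)..π, √(χ - c ^ 2 * cos t ^ 2) := calc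
    ((n + 1 : ℕ) : ℝ) * π < (2 * c / π + 2 / π ^ 2 * δ * (1 + log (32 / η))) * π := by
      rw [← hlog]
      push_cast
      gcongr
    _ = 2 * c * (1 + η / 8 * (1 + log (32 / η))) := by
      generalize log (32 / η) = l
      rw [hη_def]
      field_simp
    _ ≤ _ := le_integral_sqrt_sub_mul_cos_sq hc.le hη hχη
  have hcount := (le_encard_zeros_of_mul_pi_lt_integral hχ hψ hphase).trans hzeros
  exact n.lt_succ_self.not_ge (Nat.cast_le.1 hcount)

theorem stmt7 (c : ℝ) (hc : 0 < c) (δ : ℝ) (hδ1 : 3 < δ) (hδ2 : δ < 5 * π / 4 * c)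
    (n : ℕ) (hn : 0 < n)
    (hnlow : 2 * c / π < (n : ℝ))
    (hnhigh : (n : ℝ) ≤ 2 * c / π + 2 / π ^ 2 * δ * Real.log (4 * Real.exp 1 * π * c / δ) - 3)
    (ψ : ℝ → ℝ) (χ : ℝ) (lam : ℂ)
    (hpswf : IsPSWF c n ψ χ lam) :
    (χ - c ^ 2) / c ^ 2 < 8 / π * (δ / c) :=
  stmt7_general hc (by linarith) (by linarith) hpswf.isSturmLiouvilleSolution
    hpswf.encard_zeros.le
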